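/- Let K be a strictly convex body in ℝⁿ and τ > 0. For every 0 < δ < min(1, τⁿ)·vol(K), the boundary of the convolution body K(δ,τ) = {x : vol(K ∩ (x + τK)) ≥ δ} is of class C¹; that is, at each boundary point of K(δ,τ) there is a unique supporting hyperplane, varying continuously. -/

import Mathlib

open MeasureTheory Set
open scoped Pointwise RealInnerProductSpace
open scoped ENNReal Topology
open Filter

/-- One-dimensional Brunn–Minkowski inequality. -/
theorem Real.volume_add_volume_le_of_add_mem {A B C : Set ℝ} (hA : MeasurableSet A)
    (hB : MeasurableSet B) (hAne : A.Nonempty) (hBne : B.Nonempty)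
    (hC : ∀ x ∈ A, ∀ y ∈ B, x + y ∈ C) : volume A + volume B ≤ volume C := by
  have compact_case : ∀ S ⊆ A, ∀ T ⊆ B, IsCompact S → IsCompact T → S.Nonempty → T.Nonempty →
      volume S + volume T ≤ volume C := by
    intro S hSA T hTB hS hT hSne hTne
    obtain ⟨p, hpS, hp⟩ := hS.exists_isGreatest hSne
    obtain ⟨q, hqT, hq⟩ := hT.exists_isLeast hTne
    have hdisj : AEDisjoint volume ((fun x => x + q) '' S) ((fun y => p + y) '' T) := by
      refine measure_mono_null (t := {p + q}) ?_ (by simp)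
      rintro _ ⟨⟨x, hx, rfl⟩, ⟨y, hy, hxy⟩⟩
      have h1 := hp hx
      have h2 := hq hy
      simp only [mem_singleton_iff] at hxy ⊢
      linarith
    have hunion := measure_union₀ (μ := volume) (t := (fun y => p + y) '' T)
      ((hT.image (by fun_prop)).measurableSet.nullMeasurableSet) hdisj
    simp only [image_add_right, image_add_left, measure_preimage_add,
      measure_preimage_add_right] at hunion
    rw [← hunion]
    refine measure_mono ?_
    rintro z (hz | hz)
    · simpa using hC _ (hSA hz) q (hTB hqT)
    · simpa using hC p (hSA hpS) _ (hTB hz)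
  obtain ⟨x₀, hx₀⟩ := hAne
  obtain ⟨y₀, hy₀⟩ := hBne
  rw [hA.measure_eq_iSup_isCompact, hB.measure_eq_iSup_isCompact]
  simp only [iSup_and']
  refine ENNReal.biSup_add_biSup_le' ⟨∅, by simp⟩ ⟨∅, by simp⟩ fun S hS T hT => ?_
  calc volume S + volume T ≤ volume (insert x₀ S) + volume (insert y₀ T) := by
        gcongr <;> exact subset_insert _ _
    _ ≤ volume C := compact_case _ (insert_subset hx₀ hS.1) _ (insert_subset hy₀ hT.1)
        (hS.2.insert _) (hT.2.insert _) (insert_nonempty _ _) (insert_nonempty _ _)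

theorem MeasureTheory.lintegral_eq_lintegral_meas_ofReal_lt {α : Type*} [MeasurableSpace α]
    (μ : Measure α) {f : α → ℝ≥0∞} (hf : Measurable f) (hfin : ∀ x, f x ≠ ∞) :
    ∫⁻ x, f x ∂μ = ∫⁻ t in Ioi (0 : ℝ), μ {x | ENNReal.ofReal t < f x} := by
  have h := lintegral_eq_lintegral_meas_lt μ (f := fun x => (f x).toReal)
    (Eventually.of_forall fun x => ENNReal.toReal_nonneg) hf.ennreal_toReal.aemeasurable
  simp only [ENNReal.ofReal_toReal (hfin _)] at h
  rw [h]
  refine setLIntegral_congr_fun measurableSet_Ioi fun t ht => ?_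
  simp only [ENNReal.ofReal_lt_iff_lt_toReal (le_of_lt ht) (hfin _)]

theorem lintegral_add_le_of_iSup_eq_one {f g h : ℝ → ℝ≥0∞} (hf : Measurable f)
    (hg : Measurable g) (hh : Measurable h) {a b : ℝ} (ha : 0 < a) (hb : 0 < b)
    (hab : a + b = 1) (hfs : ⨆ x, f x = 1) (hgs : ⨆ x, g x = 1)
    (H : ∀ x y, f x ^ a * g y ^ b ≤ h (a * x + b * y)) :
    ENNReal.ofReal a * (∫⁻ x, f x) + ENNReal.ofReal b * (∫⁻ x, g x) ≤ ∫⁻ x, h x := by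
  have hf1 : ∀ x, f x ≤ 1 := fun x => hfs ▸ le_iSup f x
  have hg1 : ∀ x, g x ≤ 1 := fun x => hgs ▸ le_iSup g x
  refine le_trans ?_ (lintegral_mono (fun x => min_le_left (h x) 1))
  rw [lintegral_eq_lintegral_meas_ofReal_lt _ hf fun x => ((hf1 x).trans_lt (by simp)).ne,
    lintegral_eq_lintegral_meas_ofReal_lt _ hg fun x => ((hg1 x).trans_lt (by simp)).ne,
    lintegral_eq_lintegral_meas_ofReal_lt _ (hh.min measurable_const)
      fun x => ((min_le_right (h x) 1).trans_lt (by simp)).ne,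
    ← lintegral_const_mul' _ _ (by simp), ← lintegral_const_mul' _ _ (by simp)]
  refine (le_lintegral_add _ _).trans (setLIntegral_mono' measurableSet_Ioi fun t ht => ?_)
  rcases lt_or_ge t 1 with ht1 | ht1
  · have hT : ENNReal.ofReal t < 1 := by simpa using ht1
    obtain ⟨x₀, hx₀⟩ : ∃ x, ENNReal.ofReal t < f x := lt_iSup_iff.1 (hfs ▸ hT)
    obtain ⟨y₀, hy₀⟩ : ∃ x, ENNReal.ofReal t < g x := lt_iSup_iff.1 (hgs ▸ hT)
    have mf : MeasurableSet {x | ENNReal.ofReal t < f x} := measurableSet_lt measurable_const hf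
    have mg : MeasurableSet {x | ENNReal.ofReal t < g x} := measurableSet_lt measurable_const hg
    have key := Real.volume_add_volume_le_of_add_mem
      (A := a • {x | ENNReal.ofReal t < f x}) (B := b • {x | ENNReal.ofReal t < g x})
      (C := {x | ENNReal.ofReal t < min (h x) 1})
      (mf.const_smul₀ a) (mg.const_smul₀ b) (Set.Nonempty.smul_set ⟨x₀, hx₀⟩)
      (Set.Nonempty.smul_set ⟨y₀, hy₀⟩) ?_
    · simpa [Measure.addHaar_smul, abs_of_pos ha, abs_of_pos hb] using key
    · rintro _ ⟨x, hx, rfl⟩ _ ⟨y, hy, rfl⟩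
      refine lt_min (lt_of_lt_of_le ?_ (H x y)) hT
      calc ENNReal.ofReal t = ENNReal.ofReal t ^ a * ENNReal.ofReal t ^ b := by
            rw [← ENNReal.rpow_add_of_nonneg _ _ ha.le hb.le, hab, ENNReal.rpow_one]
        _ < f x ^ a * g y ^ b :=
            ENNReal.mul_lt_mul (ENNReal.rpow_lt_rpow hx ha) (ENNReal.rpow_lt_rpow hy hb)
  · have hT : 1 ≤ ENNReal.ofReal t := by simpa using ht1
    have ef : {x | ENNReal.ofReal t < f x} = ∅ :=
      eq_empty_of_forall_notMem fun x hx => absurd ((hf1 x).trans hT) (not_le.2 hx)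
    have eg : {x | ENNReal.ofReal t < g x} = ∅ :=
      eq_empty_of_forall_notMem fun x hx => absurd ((hg1 x).trans hT) (not_le.2 hx)
    simp [ef, eg]

theorem ENNReal.rpow_mul_rpow_le_add {a b : ℝ} (ha : 0 < a) (hb : 0 < b) (hab : a + b = 1)
    (p q : ℝ≥0∞) : p ^ a * q ^ b ≤ ENNReal.ofReal a * p + ENNReal.ofReal b * q := by
  rcases eq_or_ne p ∞ with rfl | hp
  · simp [ENNReal.mul_top, ha]
  rcases eq_or_ne q ∞ with rfl | hq
  · simp [ENNReal.mul_top, hb]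
  lift p to NNReal using hp
  lift q to NNReal using hq
  have := NNReal.geom_mean_le_arith_mean2_weighted a.toNNReal b.toNNReal p q
    (by rw [← Real.toNNReal_add ha.le hb.le, hab, Real.toNNReal_one])
  rw [Real.coe_toNNReal _ ha.le, Real.coe_toNNReal _ hb.le] at this
  rw [← ENNReal.coe_rpow_of_nonneg _ ha.le, ← ENNReal.coe_rpow_of_nonneg _ hb.le]
  unfold ENNReal.ofReal
  exact_mod_cast this

theorem prekopa_leindler_real_of_bounded {f g h : ℝ → ℝ≥0∞} (hf : Measurable f)
    (hg : Measurable g) (hh : Measurable h) {a b : ℝ} (ha : 0 < a) (hb : 0 < b)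
    (hab : a + b = 1) (hfs : ⨆ x, f x ≠ ∞) (hgs : ⨆ x, g x ≠ ∞)
    (H : ∀ x y, f x ^ a * g y ^ b ≤ h (a * x + b * y)) :
    (∫⁻ x, f x) ^ a * (∫⁻ x, g x) ^ b ≤ ∫⁻ x, h x := by
  set α := ⨆ x, f x with hα
  set β := ⨆ x, g x with hβ
  rcases eq_or_ne α 0 with h0 | hα0
  · have : ∀ x, f x = 0 := by simpa [hα] using h0
    simp [this, ha]
  rcases eq_or_ne β 0 with h0 | hβ0
  · have : ∀ x, g x = 0 := by simpa [hβ] using h0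
    simp [this, hb]
  set c := α ^ a * β ^ b with hc
  have hc0 : c ≠ 0 := by simp [hc, hα0, hβ0, hfs, hgs, ENNReal.rpow_eq_zero_iff]
  have hcT : c ≠ ∞ := ENNReal.mul_ne_top (by simp [hα0, hfs])
    (by simp [hβ0, hgs])
  have hcinv : c⁻¹ = α⁻¹ ^ a * β⁻¹ ^ b := by
    rw [hc, ENNReal.mul_inv, ENNReal.inv_rpow, ENNReal.inv_rpow]
    · exact Or.inr (by simp [hβ0, hgs])
    · exact Or.inl (by simp [hα0, hfs])
  have key := lintegral_add_le_of_iSup_eq_one (hf.const_mul α⁻¹) (hg.const_mul β⁻¹)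
    (hh.const_mul c⁻¹) ha hb hab
    (by rw [← ENNReal.mul_iSup, ENNReal.inv_mul_cancel hα0 hfs])
    (by rw [← ENNReal.mul_iSup, ENNReal.inv_mul_cancel hβ0 hgs])
    (fun x y => by
      rw [ENNReal.mul_rpow_of_nonneg _ _ ha.le, ENNReal.mul_rpow_of_nonneg _ _ hb.le,
        mul_mul_mul_comm, ← hcinv]
      gcongr
      exact H x y)
  have key' := (ENNReal.rpow_mul_rpow_le_add ha hb hab _ _).trans key
  rw [lintegral_const_mul _ hf, lintegral_const_mul _ hg, lintegral_const_mul _ hh,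
    ENNReal.mul_rpow_of_nonneg _ _ ha.le, ENNReal.mul_rpow_of_nonneg _ _ hb.le,
    mul_mul_mul_comm, ← hcinv] at key'
  exact (ENNReal.mul_le_mul_iff_right (ENNReal.inv_ne_zero.2 hcT) (ENNReal.inv_ne_top.2 hc0)).1 key'

theorem tendsto_lintegral_min_natCast {α : Type*} [MeasurableSpace α] (μ : Measure α)
    {f : α → ℝ≥0∞} (hf : Measurable f) :
    Tendsto (fun N : ℕ => ∫⁻ x, min (f x) N ∂μ) atTop (𝓝 (∫⁻ x, f x ∂μ)) := by
  refine lintegral_tendsto_of_tendsto_of_monotone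
    (fun N => (hf.min measurable_const).aemeasurable)
    (Eventually.of_forall fun x i j hij => min_le_min_left _ (by exact_mod_cast hij))
    (Eventually.of_forall fun x => ?_)
  simpa using (tendsto_const_nhds (x := f x)).min ENNReal.tendsto_nat_nhds_top

/-- One-dimensional Prékopa–Leindler inequality. -/
theorem prekopa_leindler_real {f g h : ℝ → ℝ≥0∞} (hf : Measurable f)
    (hg : Measurable g) (hh : Measurable h) {a b : ℝ} (ha : 0 < a) (hb : 0 < b)
    (hab : a + b = 1) (H : ∀ x y, f x ^ a * g y ^ b ≤ h (a * x + b * y)) :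
    (∫⁻ x, f x) ^ a * (∫⁻ x, g x) ^ b ≤ ∫⁻ x, h x := by
  rcases eq_or_ne (∫⁻ x, f x) 0 with h0 | hf0
  · simp [h0, ha]
  rcases eq_or_ne (∫⁻ x, g x) 0 with h0 | hg0
  · simp [h0, hb]
  have lim := ENNReal.Tendsto.mul
    ((ENNReal.continuous_rpow_const (y := a)).tendsto _ |>.comp
      (tendsto_lintegral_min_natCast volume hf))
    (Or.inl (by simp [ENNReal.rpow_eq_zero_iff, hf0, ha, ha.le.not_gt]))
    ((ENNReal.continuous_rpow_const (y := b)).tendsto _ |>.comp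
      (tendsto_lintegral_min_natCast volume hg))
    (Or.inl (by simp [ENNReal.rpow_eq_zero_iff, hg0, hb, hb.le.not_gt]))
  refine le_of_tendsto' lim fun N => ?_
  refine prekopa_leindler_real_of_bounded (hf.min measurable_const) (hg.min measurable_const)
    hh ha hb hab ?_ ?_ fun x y => le_trans ?_ (H x y)
  · exact ((iSup_le fun x => min_le_right _ _).trans_lt (ENNReal.natCast_lt_top N)).ne
  · exact ((iSup_le fun x => min_le_right _ _).trans_lt (ENNReal.natCast_lt_top N)).ne
  · gcongr <;> exact min_le_left _ _

/-- Prékopa–Leindler inequality. -/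
theorem prekopa_leindler_pi {a b : ℝ} (ha : 0 < a) (hb : 0 < b) (hab : a + b = 1) (n : ℕ)
    {f g h : (Fin n → ℝ) → ℝ≥0∞} (hf : Measurable f) (hg : Measurable g) (hh : Measurable h)
    (H : ∀ x y, f x ^ a * g y ^ b ≤ h (a • x + b • y)) :
    (∫⁻ x, f x) ^ a * (∫⁻ x, g x) ^ b ≤ ∫⁻ x, h x := by
  induction n with
  | zero =>
    simp only [lintegral_unique, volume_pi, Measure.pi_univ, Finset.univ_eq_empty,
      Finset.prod_empty, mul_one]
    convert H default default
  | succ n ih =>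
    have slice : ∀ k : (Fin (n + 1) → ℝ) → ℝ≥0∞, Measurable k →
        ∫⁻ x, k x = ∫⁻ s : ℝ, ∫⁻ y : Fin n → ℝ, k (Fin.cons s y) := by
      intro k hk
      have e := (volume_preserving_piFinSuccAbove (fun _ : Fin (n + 1) => ℝ) 0).symm
      rw [← e.lintegral_comp hk, Measure.volume_eq_prod,
        lintegral_prod (fun p => k ((MeasurableEquiv.piFinSuccAbove (fun _ => ℝ) 0).symm p))
          (hk.comp e.measurable).aemeasurable]
      simp [MeasurableEquiv.piFinSuccAbove, Fin.insertNthEquiv]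
    have hcons : Measurable fun p : ℝ × (Fin n → ℝ) => (Fin.cons p.1 p.2 : Fin (n + 1) → ℝ) := by
      refine measurable_pi_iff.2 fun i => ?_
      refine Fin.cases ?_ (fun j => ?_) i
      · simpa using measurable_fst
      · simpa [Function.comp_def] using (measurable_pi_apply j).comp measurable_snd
    have hsec : ∀ s : ℝ, Measurable fun y : Fin n → ℝ => (Fin.cons s y : Fin (n + 1) → ℝ) :=
      fun s => hcons.comp measurable_prodMk_left
    rw [slice f hf, slice g hg, slice h hh]
    refine prekopa_leindler_real (hf.comp hcons).lintegral_prod_right'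
      (hg.comp hcons).lintegral_prod_right' (hh.comp hcons).lintegral_prod_right' ha hb hab
      fun s t => ih (hf.comp (hsec s)) (hg.comp (hsec t)) (hh.comp (hsec _)) fun x y => ?_
    refine (H _ _).trans (le_of_eq ?_)
    congr 1
    ext i
    refine Fin.cases ?_ (fun j => ?_) i <;> simp

/-- Multiplicative Brunn–Minkowski inequality. -/
theorem EuclideanSpace.volume_rpow_mul_volume_rpow_le {n : ℕ} {a b : ℝ} (ha : 0 < a) (hb : 0 < b)
    (hab : a + b = 1) {A B C : Set (EuclideanSpace ℝ (Fin n))} (hA : MeasurableSet A)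
    (hB : MeasurableSet B) (hC : MeasurableSet C)
    (H : ∀ x ∈ A, ∀ y ∈ B, a • x + b • y ∈ C) :
    volume A ^ a * volume B ^ b ≤ volume C := by
  have e := PiLp.volume_preserving_toLp (Fin n)
  have key := prekopa_leindler_pi ha hb hab n
    (f := (WithLp.toLp 2 ⁻¹' A).indicator 1) (g := (WithLp.toLp 2 ⁻¹' B).indicator 1)
    (h := (WithLp.toLp 2 ⁻¹' C).indicator 1)
    (measurable_one.indicator (e.measurable hA)) (measurable_one.indicator (e.measurable hB))
    (measurable_one.indicator (e.measurable hC)) fun x y => ?_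
  · rwa [lintegral_indicator_one (e.measurable hA), lintegral_indicator_one (e.measurable hB),
      lintegral_indicator_one (e.measurable hC), e.measure_preimage hA.nullMeasurableSet,
      e.measure_preimage hB.nullMeasurableSet, e.measure_preimage hC.nullMeasurableSet] at key
  · by_cases hx : WithLp.toLp 2 x ∈ A
    · by_cases hy : WithLp.toLp 2 y ∈ B
      · simp [indicator, hx, hy, H _ hx _ hy]
      · simp [indicator, hy, hb]
    · simp [indicator, hx, ha]
section CommonExit

variable {E : Type*} [NormedAddCommGroup E]

/-- The points of `K ∩ L` that leave both `K` and `L` when translated by `v`. -/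
def commonExit (K L : Set E) (v : E) : Set E := {y | y ∈ K ∩ L ∧ y + v ∉ K ∪ L}

theorem measurableSet_commonExit [MeasurableSpace E] [BorelSpace E] {K L : Set E}
    (hK : MeasurableSet K) (hL : MeasurableSet L) (v : E) :
    MeasurableSet (commonExit K L v) :=
  (hK.inter hL).inter ((continuous_add_const v).measurable (hK.union hL)).compl

theorem two_mul_measure_inter_le [MeasurableSpace E] [BorelSpace E] (μ : Measure E)
    [μ.IsAddRightInvariant] {K L : Set E}
    (hK : MeasurableSet K) (hL : MeasurableSet L) (v : E) :
    2 * μ (K ∩ L) ≤ μ (K ∩ (fun y => y - v) ⁻¹' L) + μ (K ∩ (fun y => y + v) ⁻¹' L)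
      + (μ (commonExit K L v) + μ (commonExit K L (-v))) := by
  set M := K ∩ L with hM
  have hMm : MeasurableSet M := hK.inter hL
  have hadd : Measurable fun y : E => y + v := (continuous_add_const v).measurable
  have e1 : μ (K ∩ (fun y => y - v) ⁻¹' L) = μ ((fun y => y + v) ⁻¹' K ∩ L) := by
    rw [← measure_preimage_add_right μ v (K ∩ (fun y => y - v) ⁻¹' L)]
    congr 1
    ext y
    simp
  have e2 : μ ((fun y => y + v) ⁻¹' M) = μ M := measure_preimage_add_right μ v M
  have e3 : μ ((fun y => y + v) ⁻¹' commonExit K L (-v)) = μ (commonExit K L (-v)) :=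
    measure_preimage_add_right μ v _
  have h1 := measure_union_add_inter M (μ := μ) (hadd hMm)
  have h2 := measure_union_add_inter ((fun y => y + v) ⁻¹' K ∩ L) (μ := μ)
    (hK.inter (hadd hL))
  rw [e2] at h1
  rw [two_mul, ← h1, e1, ← h2, ← e3]
  have hinter : M ∩ (fun y => y + v) ⁻¹' M =
      ((fun y => y + v) ⁻¹' K ∩ L) ∩ (K ∩ (fun y => y + v) ⁻¹' L) := by
    ext y
    simp only [hM, mem_inter_iff, mem_preimage]
    tauto
  have hunion : M ∪ (fun y => y + v) ⁻¹' M ⊆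
      (((fun y => y + v) ⁻¹' K ∩ L) ∪ (K ∩ (fun y => y + v) ⁻¹' L)) ∪
        (commonExit K L v ∪ (fun y => y + v) ⁻¹' commonExit K L (-v)) := by
    intro y
    simp only [hM, commonExit, mem_union, mem_inter_iff, mem_preimage, mem_ofPred_eq,
      add_neg_cancel_right]
    tauto
  rw [hinter, add_right_comm]
  gcongr
  exact (measure_mono hunion).trans ((measure_union_le _ _).trans
    (add_le_add_right (measure_union_le _ _) _))

variable [NormedSpace ℝ E]

/-- The set swept out by translating `Q` along the segment from `0` to `v`. -/
def sweep (Q : Set E) (v : E) : Set E := Q + (fun t : ℝ => t • v) '' Icc 0 1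

theorem mem_sweep {Q : Set E} {v y : E} {t : ℝ} (hy : y ∈ Q) (ht : t ∈ Icc (0 : ℝ) 1) :
    y + t • v ∈ sweep Q v :=
  add_mem_add hy ⟨t, ht, rfl⟩

theorem isCompact_sweep {Q : Set E} (hQ : IsCompact Q) (v : E) : IsCompact (sweep Q v) :=
  hQ.add (isCompact_Icc.image (by fun_prop))

theorem sweep_cthickening_subset {Q : Set E} (hQ : IsCompact Q) (v : E) {η : ℝ} (hη : 0 ≤ η) :
    sweep (Metric.cthickening η Q) v ⊆ Metric.cthickening η (sweep Q v) := by
  rw [← (isCompact_sweep hQ v).add_closedBall_zero hη, ← hQ.add_closedBall_zero hη]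
  unfold sweep
  rw [add_right_comm]

theorem eventually_commonExit_inter_subset {K L C : Set E} (hK : IsCompact K) (hL : IsCompact L)
    (hC : IsClosed C) (u : E) {η : ℝ} (hη : 0 < η) :
    ∀ᶠ h : ℝ in 𝓝[>] 0, commonExit K L (h • u) ∩ C ⊆
      Metric.cthickening η ((frontier K ∩ frontier L) ∩ C) := by
  set Q := (frontier K ∩ frontier L) ∩ C with hQ
  have hD : IsCompact (((K ∩ L) ∩ C) \ Metric.thickening η Q) :=
    ((hK.inter_right hL.isClosed).inter_right hC).diff Metric.isOpen_thickening
  have hsub : ((K ∩ L) ∩ C) \ Metric.thickening η Q ⊆ interior K ∪ interior L := by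
    rintro y ⟨⟨⟨hyK, hyL⟩, hyC⟩, hyQ⟩
    by_contra hy
    rw [mem_union, not_or] at hy
    exact hyQ (Metric.self_subset_thickening hη _
      ⟨⟨⟨subset_closure hyK, hy.1⟩, ⟨subset_closure hyL, hy.2⟩⟩, hyC⟩)
  obtain ⟨r, hr, hrsub⟩ := hD.exists_thickening_subset_open
    (isOpen_interior.union isOpen_interior) hsub
  have hlim : Tendsto (fun h : ℝ => h • u) (𝓝[>] 0) (𝓝 0) := by
    have : Tendsto (fun h : ℝ => h • u) (𝓝 0) (𝓝 ((0 : ℝ) • u)) :=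
      (continuous_id.smul continuous_const).tendsto 0
    rw [zero_smul] at this
    exact this.mono_left nhdsWithin_le_nhds
  filter_upwards [hlim (Metric.ball_mem_nhds 0 hr)] with h hh y hy
  by_contra hyQ
  have hyD : y ∈ ((K ∩ L) ∩ C) \ Metric.thickening η Q :=
    ⟨⟨hy.1.1, hy.2⟩, fun h' => hyQ (Metric.thickening_subset_cthickening _ _ h')⟩
  have : y + h • u ∈ interior K ∪ interior L := by
    refine hrsub (Metric.mem_thickening_iff.2 ⟨y, hyD, ?_⟩)
    simpa [dist_eq_norm] using hh
  exact hy.1.2 (union_subset_union interior_subset interior_subset this)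

variable [MeasurableSpace E] [BorelSpace E] (μ : Measure E)

theorem measure_le_ofReal_mul_measure_sweep [μ.IsAddRightInvariant] {L A W : Set E}
    (hL : Convex ℝ L) (hA : MeasurableSet A) (hAL : A ⊆ L) (hAW : A ⊆ W) {v : E} {h : ℝ}
    (hh : 0 < h) (hexit : ∀ y ∈ A, y + h • v ∉ L) :
    μ A ≤ ENNReal.ofReal h * μ (sweep W v) := by
  set J := ⌊1 / h⌋₊ with hJ
  have hpos : 0 < 1 / h := by positivity
  have hstay : ∀ y ∈ A, ∀ k : ℕ, 1 ≤ k → y + (k * h) • v ∉ A := by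
    intro y hy k hk hyk
    have hk' : (1 : ℝ) ≤ k := by exact_mod_cast hk
    refine hexit y hy ?_
    have := hL.add_smul_sub_mem (hAL hy) (hAL hyk) (t := 1 / (k : ℝ))
      ⟨by positivity, by rw [div_le_one (by linarith)]; exact hk'⟩
    convert this using 2
    rw [add_sub_cancel_left, smul_smul]
    congr 1
    field_simp
  have hdisj : Pairwise (Function.onFun Disjoint
      fun j : ℕ => (fun y => y + -((j * h) • v)) ⁻¹' A) := by
    have aux : ∀ i j : ℕ, i < j → Disjoint ((fun y => y + -((i * h) • v)) ⁻¹' A)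
        ((fun y => y + -((j * h) • v)) ⁻¹' A) := by
      intro i j hij
      refine disjoint_left.2 fun z hzi hzj => ?_
      refine hstay _ hzj (j - i) (by omega) ?_
      convert (show z + -((i * h) • v) ∈ A from hzi) using 1
      rw [Nat.cast_sub hij.le]
      module
    intro i j hij
    rcases lt_or_gt_of_ne hij with h' | h'
    · exact aux i j h'
    · exact (aux j i h').symm
  have hsum : ((J + 1 : ℕ) : ℝ≥0∞) * μ A ≤ μ (sweep W v) := by
    calc ((J + 1 : ℕ) : ℝ≥0∞) * μ A
        = ∑ j ∈ Finset.range (J + 1), μ ((fun y => y + -((j * h) • v)) ⁻¹' A) := by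
          simp [measure_preimage_add_right]
      _ = μ (⋃ j ∈ Finset.range (J + 1), (fun y => y + -((j * h) • v)) ⁻¹' A) := by
          rw [measure_biUnion_finset (fun i _ j _ hij => hdisj hij)]
          exact fun j _ => (continuous_add_const _).measurable hA
      _ ≤ μ (sweep W v) := by
          refine measure_mono (iUnion₂_subset fun j hj z hz => ?_)
          have hjJ : (j : ℝ) ≤ 1 / h :=
            (Nat.cast_le.2 (Finset.mem_range_succ_iff.1 hj)).trans (Nat.floor_le hpos.le)
          have := mem_sweep (v := v) (hAW hz) (t := j * h)
            ⟨by positivity, by rwa [le_div_iff₀ hh] at hjJ⟩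
          simpa using this
  have hone : 1 ≤ ENNReal.ofReal h * ((J + 1 : ℕ) : ℝ≥0∞) := by
    rw [← ENNReal.ofReal_natCast, ← ENNReal.ofReal_mul hh.le, ENNReal.one_le_ofReal]
    have := Nat.lt_floor_add_one (1 / h)
    rw [div_lt_iff₀ hh] at this
    push_cast
    rw [← hJ] at this
    linarith
  calc μ A = 1 * μ A := (one_mul _).symm
    _ ≤ (ENNReal.ofReal h * ((J + 1 : ℕ) : ℝ≥0∞)) * μ A := by gcongr
    _ = ENNReal.ofReal h * (((J + 1 : ℕ) : ℝ≥0∞) * μ A) := mul_assoc _ _ _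
    _ ≤ ENNReal.ofReal h * μ (sweep W v) := by gcongr

variable [FiniteDimensional ℝ E] [μ.IsAddHaarMeasure]

theorem eventually_measure_commonExit_inter_le {K L C V : Set E} (hK : IsCompact K)
    (hL : IsCompact L) (hC : IsClosed C) (hV : Convex ℝ V) (hKLV : K ∩ L ⊆ V) {u v : E}
    (hexit : ∀ᶠ h : ℝ in 𝓝[>] 0, ∀ y ∈ commonExit K L (h • u) ∩ C, y + h • v ∉ V)
    {ε : ℝ≥0∞} (hε : μ (sweep ((frontier K ∩ frontier L) ∩ C) v) < ε) :
    ∀ᶠ h : ℝ in 𝓝[>] 0, μ (commonExit K L (h • u) ∩ C) ≤ ENNReal.ofReal h * ε := by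
  have hQ : IsCompact ((frontier K ∩ frontier L) ∩ C) :=
    (((hK.of_isClosed_subset isClosed_frontier
      hK.isClosed.frontier_subset)).inter_right isClosed_frontier).inter_right hC
  have hlim := tendsto_measure_cthickening_of_isCompact (μ := μ) (isCompact_sweep hQ v)
  obtain ⟨η, hη, hηε⟩ : ∃ η : ℝ, 0 < η ∧ μ (Metric.cthickening η
      (sweep ((frontier K ∩ frontier L) ∩ C) v)) < ε :=
    ((hlim.mono_left (nhdsWithin_le_nhds (s := Ioi 0))).eventually_lt_const hε |>.and
      self_mem_nhdsWithin).exists.imp fun η h => ⟨h.2, h.1⟩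
  filter_upwards [hexit, eventually_commonExit_inter_subset hK hL hC u hη,
    self_mem_nhdsWithin] with h h1 h2 h3
  refine (measure_le_ofReal_mul_measure_sweep μ hV
    ((measurableSet_commonExit hK.measurableSet hL.measurableSet _).inter hC.measurableSet)
    (fun y hy => hKLV hy.1.1) h2 h3 h1).trans ?_
  gcongr
  exact (measure_mono (sweep_cthickening_subset hQ v hη.le)).trans hηε.le

end CommonExit

section Transversal

variable {E : Type*} [NormedAddCommGroup E] [NormedSpace ℝ E]

theorem eventually_add_smul_notMem_of_mem_commonExit {K L : Set E} (hL : Convex ℝ L) {q u w : E}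
    {ρ c : ℝ} (hρ : 0 < ρ) (hc : 0 < c) (hcu : ‖u‖ ≤ c * ρ)
    (hball : ∀ z ∈ Metric.closedBall q (3 * ρ), z - w ∈ L) :
    ∀ᶠ h : ℝ in 𝓝[>] 0, ∀ y ∈ commonExit K L (h • u) ∩ Metric.closedBall q ρ,
      y + h • (c • w) ∉ L := by
  have h1 : ∀ᶠ h : ℝ in 𝓝[>] 0, h * c < 1 := by
    have : Tendsto (fun h : ℝ => h * c) (𝓝 0) (𝓝 (0 * c)) := tendsto_id.mul_const c
    rw [zero_mul] at this
    exact (this.mono_left nhdsWithin_le_nhds).eventually_lt_const one_pos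
  have h2 : ∀ᶠ h : ℝ in 𝓝[>] 0, h * ‖c • w‖ < ρ := by
    have : Tendsto (fun h : ℝ => h * ‖c • w‖) (𝓝 0) (𝓝 (0 * ‖c • w‖)) := tendsto_id.mul_const _
    rw [zero_mul] at this
    exact (this.mono_left nhdsWithin_le_nhds).eventually_lt_const hρ
  filter_upwards [h1, h2, self_mem_nhdsWithin] with h h1 h2 (h3 : 0 < h) y hy hyL
  refine hy.1.2 (Or.inr ?_)
  have hz : y + h • (c • w) + c⁻¹ • u ∈ Metric.closedBall q (3 * ρ) := by
    have hy' : ‖y - q‖ ≤ ρ := by simpa [dist_eq_norm] using hy.2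
    have hu : ‖c⁻¹ • u‖ ≤ ρ := by
      rw [norm_smul, norm_inv, Real.norm_of_nonneg hc.le, inv_mul_le_iff₀ hc]
      exact hcu
    have hw : ‖h • (c • w)‖ ≤ ρ := by
      rw [norm_smul, Real.norm_of_nonneg h3.le]
      exact h2.le
    rw [Metric.mem_closedBall, dist_eq_norm]
    calc ‖y + h • (c • w) + c⁻¹ • u - q‖ = ‖(y - q) + h • (c • w) + c⁻¹ • u‖ := by
          congr 1; abel
      _ ≤ ‖y - q‖ + ‖h • (c • w)‖ + ‖c⁻¹ • u‖ := norm_add₃_le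
      _ ≤ 3 * ρ := by linarith
  have := hL.add_smul_sub_mem hyL (hball _ hz) (t := h * c) ⟨by positivity, h1.le⟩
  convert this using 1
  have hcc : h * c * c⁻¹ = h := by field_simp
  calc y + h • u = y + (h * c * c⁻¹) • u := by rw [hcc]
    _ = _ := by module

theorem measure_sweep_eq_zero_of_transversal [MeasurableSpace E] [BorelSpace E]
    [FiniteDimensional ℝ E] (μ : Measure E) [μ.IsAddHaarMeasure] {K L Q : Set E}
    (hK : IsClosed K) (hL : IsClosed L) (hKc : Convex ℝ K) (hLc : Convex ℝ L)
    (hint : (interior (K ∩ L)).Nonempty) {w : E} (c : ℝ) (hQ : Q ⊆ frontier K ∩ frontier L)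
    (hwK : ∀ q ∈ Q, q + w ∈ interior K) (hwL : ∀ q ∈ Q, q - w ∈ interior L) :
    μ (sweep Q (c • w)) = 0 := by
  set S : Set E := (Submodule.span ℝ {w} : Set E) with hS
  have hconv : Convex ℝ (interior (K ∩ L) + S) :=
    (hKc.inter hLc).interior.add (Submodule.convex _)
  refine measure_mono_null ?_ (hconv.addHaar_frontier μ)
  rintro _ ⟨q, hq, _, ⟨t, -, rfl⟩, rfl⟩
  have hqM : q ∈ K ∩ L := ⟨hK.frontier_subset (hQ hq).1, hL.frontier_subset (hQ hq).2⟩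
  have hmem : t • c • w ∈ S :=
    Submodule.smul_mem _ _ (Submodule.smul_mem _ _ (Submodule.mem_span_singleton_self w))
  have hopen : IsOpen (interior (K ∩ L) + S) := isOpen_interior.add_right
  refine ⟨?_, ?_⟩
  · have hqc : q ∈ closure (interior (K ∩ L)) := by
      rw [(hKc.inter hLc).closure_interior_eq_closure_of_nonempty_interior hint]
      exact subset_closure hqM
    exact map_mem_closure (f := fun z => z + t • c • w) (by fun_prop) hqc
      fun z hz => add_mem_add hz hmem
  · rw [hopen.interior_eq]
    rintro ⟨m, hm, s, hs, hms⟩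
    obtain ⟨d, rfl⟩ := Submodule.mem_span_singleton.1 hs
    obtain ⟨e, rfl⟩ : ∃ e : ℝ, m = q + e • w := by
      refine ⟨t * c - d, ?_⟩
      simp only at hms
      rw [← add_sub_cancel_right m (d • w), hms]
      module
    rw [interior_inter] at hm
    rcases le_or_gt 0 e with he | he
    · refine (hQ hq).2.2 ?_
      have := hLc.interior (hwL q hq) hm.2 (a := e / (1 + e)) (b := 1 / (1 + e))
        (by positivity) (by positivity) (by field_simp; ring)
      convert this using 1
      have h1 : (1 + e) ≠ 0 := by positivity
      match_scalars <;> field_simp <;> ring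
    · refine (hQ hq).1.2 ?_
      have h1 : 0 < 1 - e := by linarith
      have := hKc.interior (hwK q hq) hm.1 (a := -e / (1 - e)) (b := 1 / (1 - e))
        (div_nonneg (by linarith) h1.le) (by positivity) (by field_simp; ring)
      convert this using 1
      match_scalars <;> field_simp <;> ring

variable [MeasurableSpace E] [BorelSpace E]
    [FiniteDimensional ℝ E] (μ : Measure E) [μ.IsAddHaarMeasure]

theorem exists_mem_nhds_measure_commonExit_inter_le {K L : Set E} (hK : IsCompact K)
    (hL : IsCompact L) (hKc : Convex ℝ K) (hLc : Convex ℝ L)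
    (hint : (interior (K ∩ L)).Nonempty) {q : E}
    (hq : q ∈ frontier K ∩ frontier L → ∃ w, q + w ∈ interior K ∧ q - w ∈ interior L) (u : E) :
    ∃ U ∈ 𝓝 q, ∀ ε : ℝ≥0∞, ε ≠ 0 →
      ∀ᶠ h : ℝ in 𝓝[>] 0, μ (commonExit K L (h • u) ∩ U) ≤ ENNReal.ofReal h * ε := by
  by_cases hqQ : q ∈ frontier K ∩ frontier L
  · obtain ⟨w, hwK, hwL⟩ := hq hqQ
    have n1 : ∀ᶠ z in 𝓝 q, z + w ∈ interior K ∧ z - w ∈ interior L :=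
      (((continuous_add_const w).tendsto q).eventually_mem (isOpen_interior.mem_nhds hwK)).and
        (((continuous_sub_right w).tendsto q).eventually_mem (isOpen_interior.mem_nhds hwL))
    obtain ⟨r, hr, hball⟩ := Metric.nhds_basis_closedBall.mem_iff.1 n1
    have hρ : 0 < r / 3 := by positivity
    refine ⟨Metric.closedBall q (r / 3), Metric.closedBall_mem_nhds _ hρ, fun ε hε => ?_⟩
    have hr3 : Metric.closedBall q (r / 3) ⊆ Metric.closedBall q r :=
      Metric.closedBall_subset_closedBall (by linarith)
    refine eventually_measure_commonExit_inter_le μ (v := ((‖u‖ + 1) / (r / 3)) • w) hK hL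
      Metric.isClosed_closedBall hLc inter_subset_right
      (eventually_add_smul_notMem_of_mem_commonExit hLc hρ (by positivity) ?_ ?_) ?_
    · rw [div_mul_cancel₀ _ hρ.ne']
      linarith
    · intro z hz
      rw [mul_div_cancel₀ _ (by norm_num : (3 : ℝ) ≠ 0)] at hz
      exact interior_subset (hball hz).2
    · rw [measure_sweep_eq_zero_of_transversal μ hK.isClosed hL.isClosed hKc hLc hint _
        inter_subset_left (fun z hz => (hball (hr3 hz.2)).1) fun z hz => (hball (hr3 hz.2)).2]
      exact pos_iff_ne_zero.2 hε
  · have hcl : IsClosed (frontier K ∩ frontier L) := isClosed_frontier.inter isClosed_frontier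
    obtain ⟨r, hr, hball⟩ := Metric.nhds_basis_closedBall.mem_iff.1 (hcl.isOpen_compl.mem_nhds hqQ)
    refine ⟨Metric.closedBall q r, Metric.closedBall_mem_nhds _ hr, fun ε hε => ?_⟩
    refine eventually_measure_commonExit_inter_le μ (v := u) hK hL
      Metric.isClosed_closedBall hLc inter_subset_right
      (Eventually.of_forall fun h y hy hyL => hy.1.2 (Or.inr hyL)) ?_
    have : (frontier K ∩ frontier L) ∩ Metric.closedBall q r = ∅ :=
      (disjoint_left.2 fun z hz hz' => hball hz' hz).inter_eq
    simpa [this, sweep] using pos_iff_ne_zero.2 hε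

theorem eventually_measure_commonExit_le {K L : Set E} (hK : IsCompact K)
    (hL : IsCompact L) (hKc : Convex ℝ K) (hLc : Convex ℝ L)
    (hint : (interior (K ∩ L)).Nonempty) {q₀ u : E}
    (hq : ∀ q ∈ frontier K ∩ frontier L, q ≠ q₀ → ∃ w, q + w ∈ interior K ∧ q - w ∈ interior L)
    (hu : μ (sweep {q₀} u) = 0) {ε : ℝ≥0∞} (hε : ε ≠ 0) :
    ∀ᶠ h : ℝ in 𝓝[>] 0, μ (commonExit K L (h • u)) ≤ ENNReal.ofReal h * ε := by
  have hε2 : ε / 2 ≠ 0 := by simpa using hε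
  have hlim := tendsto_measure_cthickening_of_isCompact (μ := μ)
    (isCompact_sweep (isCompact_singleton (x := q₀)) u)
  rw [hu] at hlim
  obtain ⟨ρ, hρ, hρε⟩ : ∃ ρ : ℝ, 0 < ρ ∧ μ (Metric.cthickening ρ (sweep {q₀} u)) < ε / 2 :=
    ((hlim.mono_left (nhdsWithin_le_nhds (s := Ioi 0))).eventually_lt_const
      (pos_iff_ne_zero.2 hε2) |>.and self_mem_nhdsWithin).exists.imp fun η h => ⟨h.2, h.1⟩
  have near : ∀ᶠ h : ℝ in 𝓝[>] 0, μ (commonExit K L (h • u) ∩ Metric.closedBall q₀ ρ) ≤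
      ENNReal.ofReal h * (ε / 2) := by
    refine eventually_measure_commonExit_inter_le μ (v := u) hK hL
      Metric.isClosed_closedBall hLc inter_subset_right
      (Eventually.of_forall fun h y hy hyL => hy.1.2 (Or.inr hyL))
      ((measure_mono ?_).trans_lt hρε)
    refine subset_trans ?_ (sweep_cthickening_subset isCompact_singleton u hρ.le)
    rw [Metric.cthickening_singleton _ hρ.le]
    exact add_subset_add_right inter_subset_right
  have far : ∀ ε : ℝ≥0∞, ε ≠ 0 → ∀ᶠ h : ℝ in 𝓝[>] 0,
      μ (commonExit K L (h • u) ∩ ((K ∩ L) \ Metric.ball q₀ ρ)) ≤ ENNReal.ofReal h * ε := by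
    refine ((hK.inter hL).diff Metric.isOpen_ball).induction_on
      (p := fun S => ∀ ε : ℝ≥0∞, ε ≠ 0 → ∀ᶠ h : ℝ in 𝓝[>] 0,
        μ (commonExit K L (h • u) ∩ S) ≤ ENNReal.ofReal h * ε) ?_ ?_ ?_ ?_
    · simp
    · intro S T hST hT ε hε
      filter_upwards [hT ε hε] with h hh
      exact (measure_mono (inter_subset_inter_right _ hST)).trans hh
    · intro S T hS hT ε hε
      have hε2 : ε / 2 ≠ 0 := by simpa using hε
      filter_upwards [hS _ hε2, hT _ hε2] with h h1 h2
      rw [inter_union_distrib_left]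
      refine (measure_union_le _ _).trans ((add_le_add h1 h2).trans_eq ?_)
      rw [← mul_add, ENNReal.add_halves]
    · intro q hqD
      obtain ⟨U, hU, hUε⟩ := exists_mem_nhds_measure_commonExit_inter_le μ hK hL hKc hLc hint
        (q := q) (fun h => hq q h fun e => hqD.2 (e ▸ Metric.mem_ball_self hρ)) u
      exact ⟨U, mem_nhdsWithin_of_mem_nhds hU, hUε⟩
  filter_upwards [near, far _ hε2] with h h1 h2
  refine (measure_mono ?_).trans ((measure_union_le _ _).trans
    ((add_le_add h1 h2).trans_eq (by rw [← mul_add, ENNReal.add_halves])))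
  intro y hy
  by_cases hyb : y ∈ Metric.closedBall q₀ ρ
  · exact Or.inl ⟨hy, hyb⟩
  · exact Or.inr ⟨hy, hy.1, fun h' => hyb (Metric.ball_subset_closedBall h')⟩

end Transversal

section HomothetCopy

variable {E : Type*} [NormedAddCommGroup E] [NormedSpace ℝ E]

/-- The homothetic copy `x + τK` of `K`. -/
def homothetCopy (K : Set E) (τ : ℝ) (x : E) : Set E := (fun z => x + τ • z) '' K

variable {K : Set E} {τ : ℝ}

theorem mem_homothetCopy (hτ : 0 < τ) {x y : E} :
    y ∈ homothetCopy K τ x ↔ τ⁻¹ • (y - x) ∈ K := by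
  constructor
  · rintro ⟨z, hz, rfl⟩
    simpa [smul_smul, inv_mul_cancel₀ hτ.ne'] using hz
  · intro h
    exact ⟨_, h, by simp [smul_smul, mul_inv_cancel₀ hτ.ne']⟩

theorem homothetCopy_eq_vadd (x : E) : homothetCopy K τ x = x +ᵥ τ • K := by
  ext y
  simp [homothetCopy, mem_vadd_set, mem_smul_set]

theorem Convex.homothetCopy (hK : Convex ℝ K) (x : E) : Convex ℝ (homothetCopy K τ x) := by
  rw [homothetCopy_eq_vadd]
  exact (hK.smul τ).vadd x

theorem IsCompact.homothetCopy (hK : IsCompact K) (x : E) : IsCompact (homothetCopy K τ x) :=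
  hK.image (by fun_prop)

theorem interior_homothetCopy_nonempty (hτ : 0 < τ) (hK : (interior K).Nonempty) (x : E) :
    (interior (homothetCopy K τ x)).Nonempty := by
  rw [homothetCopy_eq_vadd, interior_vadd, interior_smul₀ hτ.ne']
  exact hK.smul_set.vadd_set

theorem preimage_sub_homothetCopy (hτ : 0 < τ) (x v : E) :
    (fun y => y - v) ⁻¹' homothetCopy K τ x = homothetCopy K τ (x + v) := by
  ext y
  rw [mem_preimage, mem_homothetCopy hτ, mem_homothetCopy hτ, sub_sub, add_comm v]

theorem preimage_add_homothetCopy (hτ : 0 < τ) (x v : E) :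
    (fun y => y + v) ⁻¹' homothetCopy K τ x = homothetCopy K τ (x + -v) := by
  simpa using preimage_sub_homothetCopy (K := K) hτ x (-v)

/-- At a common boundary point of `K` and `x + τK` that is not the center of the homothety, the
two boundaries cross transversally. -/
theorem StrictConvex.exists_transversal (hK : StrictConvex ℝ K) (hKint : (interior K).Nonempty)
    (hτ : 0 < τ) {x q : E} (hqK : q ∈ K) (hqL : q ∈ homothetCopy K τ x) (hne : q ≠ x + τ • q) :
    ∃ w, q + w ∈ interior K ∧ q - w ∈ interior (homothetCopy K τ x) := by
  set L := homothetCopy K τ x with hL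
  have hLc : Convex ℝ L := hK.convex.homothetCopy x
  have hLint : (interior L).Nonempty := interior_homothetCopy_nonempty hτ hKint x
  by_contra! hcon
  have hs : Convex ℝ ((fun k => k + -q) '' interior K) := by
    simpa [add_comm] using hK.convex.interior.translate (-q)
  have hso : IsOpen ((fun k => k + -q) '' interior K) :=
    (Homeomorph.addRight (-q)).isOpenMap _ isOpen_interior
  have ht : Convex ℝ ((fun l => q - l) '' interior L) := by
    have := hLc.interior.neg.translate q
    simpa [sub_eq_add_neg, ← image_neg_eq_neg, image_image] using this
  have hto : IsOpen ((fun l => q - l) '' interior L) :=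
    (Homeomorph.subLeft q).isOpenMap _ isOpen_interior
  have hdisj : Disjoint ((fun k => k + -q) '' interior K) ((fun l => q - l) '' interior L) := by
    rw [disjoint_left]
    rintro _ ⟨k, hk, rfl⟩ ⟨l, hl, hkl⟩
    refine hcon (k - q) (by simpa using hk) ?_
    simp only at hkl
    have : q - (k - q) = l := by rw [sub_eq_add_neg k, ← hkl]; abel
    rwa [this]
  obtain ⟨f, c, hfs, hft⟩ := geometric_hahn_banach_open_open hs hso ht hto hdisj
  have hKf : ∀ k ∈ interior K, f k < f q + c := fun k hk => by
    have := hfs _ ⟨k, hk, rfl⟩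
    simp only [map_add, map_neg] at this
    linarith
  have hLf : ∀ l ∈ interior L, f l < f q - c := fun l hl => by
    have := hft _ ⟨l, hl, rfl⟩
    simp only [map_sub] at this
    linarith
  have hKf' : ∀ k ∈ K, f k ≤ f q + c := fun k hk => by
    have hk' : k ∈ closure (interior K) := by
      rw [hK.convex.closure_interior_eq_closure_of_nonempty_interior hKint]
      exact subset_closure hk
    exact closure_minimal (fun z hz => (hKf z hz).le)
      (isClosed_le f.continuous continuous_const) hk'
  have hLf' : ∀ l ∈ L, f l ≤ f q - c := fun l hl => by
    have hl' : l ∈ closure (interior L) := by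
      rw [hLc.closure_interior_eq_closure_of_nonempty_interior hLint]
      exact subset_closure hl
    exact closure_minimal (fun z hz => (hLf z hz).le)
      (isClosed_le f.continuous continuous_const) hl'
  have hc : c = 0 := by linarith [hKf' q hqK, hLf' q hqL]
  subst hc
  obtain ⟨k, hk, hkq⟩ := hqL
  have hkne : k ≠ q := fun h => hne (by rw [← h]; simpa [h] using hkq.symm)
  have hfk : f q ≤ f k := by
    have h' : f q = f x + τ * f k := by rw [← hkq]; simp
    have h2 : f (x + τ • q) ≤ f q - 0 := hLf' _ ⟨q, hqK, rfl⟩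
    simp only [map_add, map_smul, smul_eq_mul, sub_zero] at h2
    exact le_of_mul_le_mul_left (by linarith) hτ
  have hmid := hKf _ (hK hk hqK hkne (a := 1 / 2) (b := 1 / 2) (by norm_num) (by norm_num)
    (by norm_num))
  simp only [map_add, map_smul, smul_eq_mul] at hmid
  linarith

variable [MeasurableSpace E] [BorelSpace E] [FiniteDimensional ℝ E] (μ : Measure E)
  [μ.IsAddHaarMeasure]

theorem continuous_measure_inter_homothetCopy (hK : IsCompact K) (hKc : Convex ℝ K)
    (hτ : 0 < τ) : Continuous fun x => μ (K ∩ homothetCopy K τ x) := by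
  refine continuous_iff_continuousAt.2 fun x => ?_
  refine tendsto_measure_of_ae_tendsto_indicator (𝓝 x)
    (hK.measurableSet.inter (hK.homothetCopy x).measurableSet)
    (fun x => hK.measurableSet.inter (hK.homothetCopy x).measurableSet)
    hK.measurableSet hK.measure_lt_top.ne (Eventually.of_forall fun x => inter_subset_left) ?_
  have hnull : μ ((fun y => y + -x) ⁻¹' ((fun y => τ⁻¹ • y) ⁻¹' frontier K)) = 0 := by
    rw [measure_preimage_add_right, Measure.addHaar_preimage_smul μ (inv_ne_zero hτ.ne'),
      hKc.addHaar_frontier μ, mul_zero]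
  filter_upwards [measure_eq_zero_iff_ae_notMem.1 hnull] with y hy
  have hcont : Tendsto (fun x' => τ⁻¹ • (y - x')) (𝓝 x) (𝓝 (τ⁻¹ • (y - x))) :=
    Continuous.tendsto (by fun_prop) x
  have hy' : τ⁻¹ • (y - x) ∉ frontier K := by simpa [sub_eq_add_neg] using hy
  by_cases hin : τ⁻¹ • (y - x) ∈ K
  · have hint : τ⁻¹ • (y - x) ∈ interior K := by
      by_contra h
      exact hy' ⟨subset_closure hin, h⟩
    filter_upwards [hcont (isOpen_interior.mem_nhds hint)] with x' hx'
    have h2 : τ⁻¹ • (y - x') ∈ K := interior_subset hx'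
    simp only [mem_inter_iff, mem_homothetCopy hτ, hin, h2]
  · filter_upwards [hcont (hK.isClosed.isOpen_compl.mem_nhds hin)] with x' hx'
    have h2 : τ⁻¹ • (y - x') ∉ K := hx'
    simp only [mem_inter_iff, mem_homothetCopy hτ, hin, h2]

theorem lt_measure_inter_homothetCopy (hKc : Convex ℝ K) (hτ : 0 < τ)
    {δ : ℝ≥0∞} (hδ : δ < ENNReal.ofReal (min 1 (τ ^ Module.finrank ℝ E)) * μ K) {k : E}
    (hk : k ∈ K) : δ < μ (K ∩ homothetCopy K τ ((1 - τ) • k)) := by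
  refine hδ.trans_le ?_
  rcases le_total τ 1 with h1 | h1
  · have hsub : homothetCopy K τ ((1 - τ) • k) ⊆ K := by
      rintro _ ⟨z, hz, rfl⟩
      exact hKc hk hz (by linarith) hτ.le (by ring)
    rw [inter_eq_self_of_subset_right hsub, homothetCopy_eq_vadd, measure_vadd,
      Measure.addHaar_smul, abs_of_pos (by positivity)]
    gcongr
    exact min_le_right _ _
  · have hsub : K ⊆ homothetCopy K τ ((1 - τ) • k) := by
      intro z hz
      rw [mem_homothetCopy hτ]
      have := hKc hz hk (a := τ⁻¹) (b := 1 - τ⁻¹) (by positivity)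
        (by linarith [inv_le_one_of_one_le₀ h1]) (by ring)
      convert this using 1
      match_scalars <;> field_simp
      ring
    rw [inter_eq_self_of_subset_left hsub]
    calc _ ≤ ENNReal.ofReal 1 * μ K := by gcongr; exact min_le_left _ _
      _ = μ K := by simp

theorem measure_sweep_singleton_eq_zero (q : E) {u : E} (hu : Submodule.span ℝ {u} ≠ ⊤) :
    μ (sweep {q} u) = 0 := by
  refine measure_mono_null (t := (fun y => y + -q) ⁻¹' (Submodule.span ℝ {u} : Set E)) ?_ ?_
  · rintro _ ⟨_, rfl, _, ⟨t, -, rfl⟩, rfl⟩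
    simpa using Submodule.smul_mem _ t (Submodule.mem_span_singleton_self u)
  · rw [measure_preimage_add_right, Measure.addHaar_submodule μ _ hu]

theorem interior_nonempty_of_measure_ne_zero {M : Set E} (hM : IsClosed M) (hMc : Convex ℝ M)
    (h : μ M ≠ 0) : (interior M).Nonempty := by
  by_contra hemp
  rw [not_nonempty_iff_eq_empty] at hemp
  refine h ?_
  rw [← hMc.addHaar_frontier μ, hM.frontier_eq, hemp, sdiff_empty]

end HomothetCopy

section ConvolutionBody

variable {n : ℕ} {K : Set (EuclideanSpace ℝ (Fin n))} {τ : ℝ}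

local notation "𝔼" => EuclideanSpace ℝ (Fin n)

theorem rpow_mul_rpow_le_volume_inter_homothetCopy (hK : IsCompact K) (hKc : Convex ℝ K)
    {a b : ℝ} (ha : 0 < a) (hb : 0 < b) (hab : a + b = 1) (x y : 𝔼) :
    volume (K ∩ homothetCopy K τ x) ^ a * volume (K ∩ homothetCopy K τ y) ^ b ≤
      volume (K ∩ homothetCopy K τ (a • x + b • y)) := by
  have hm : ∀ x, MeasurableSet (K ∩ homothetCopy K τ x) := fun x =>
    hK.measurableSet.inter (hK.homothetCopy x).measurableSet
  refine EuclideanSpace.volume_rpow_mul_volume_rpow_le ha hb hab (hm _) (hm _) (hm _) ?_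
  rintro p ⟨hpK, k, hk, rfl⟩ r ⟨hrK, l, hl, rfl⟩
  refine ⟨hKc hpK hrK ha.le hb.le hab, a • k + b • l, hKc hk hl ha.le hb.le hab, ?_⟩
  module

theorem convex_setOf_le_volume_inter_homothetCopy (hK : IsCompact K) (hKc : Convex ℝ K)
    (δ : ℝ≥0∞) : Convex ℝ {x : 𝔼 | δ ≤ volume (K ∩ homothetCopy K τ x)} := by
  refine convex_iff_forall_pos.2 fun x hx y hy a b ha hb hab => ?_
  refine le_trans ?_ (rpow_mul_rpow_le_volume_inter_homothetCopy hK hKc ha hb hab x y)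
  calc δ = δ ^ a * δ ^ b := by
        rw [← ENNReal.rpow_add_of_nonneg _ _ ha.le hb.le, hab, ENNReal.rpow_one]
    _ ≤ _ := by
        gcongr
        · exact hx
        · exact hy

/-- Past a supporting hyperplane the overlap volume drops at least linearly. -/
theorem eventually_volume_inter_homothetCopy_le (hK : IsCompact K) (hKc : Convex ℝ K)
    {δ : ℝ≥0∞} (hδ0 : δ ≠ 0) {x y u v : 𝔼} (hy : δ < volume (K ∩ homothetCopy K τ y))
    (hv : ∀ z, δ ≤ volume (K ∩ homothetCopy K τ z) → ⟪z, v⟫ ≤ ⟪x, v⟫) (huv : 0 < ⟪u, v⟫) :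
    ∃ c > 0, ∀ᶠ h : ℝ in 𝓝[>] 0,
      volume (K ∩ homothetCopy K τ (x + h • u)) ≤ ENNReal.ofReal (δ.toReal - c * h) := by
  have hfin : ∀ z, volume (K ∩ homothetCopy K τ z) ≠ ∞ := fun z =>
    ((measure_mono inter_subset_left).trans_lt hK.measure_lt_top).ne
  have hδT : δ ≠ ∞ := hy.ne_top
  set D := δ.toReal with hD
  have hD0 : 0 < D := ENNReal.toReal_pos hδ0 hδT
  set Y := (volume (K ∩ homothetCopy K τ y)).toReal with hY
  have hDY : D < Y := (ENNReal.toReal_lt_toReal hδT (hfin y)).2 hy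
  obtain ⟨κ, hκ, hκv⟩ : ∃ κ : ℝ, 0 < κ ∧ 0 < ⟪u + κ • (y - x), v⟫ := by
    have : Tendsto (fun κ : ℝ => ⟪u + κ • (y - x), v⟫) (𝓝 0) (𝓝 ⟪u + (0 : ℝ) • (y - x), v⟫) :=
      Continuous.tendsto (by fun_prop) 0
    rw [zero_smul, add_zero] at this
    exact ((this.mono_left (nhdsWithin_le_nhds (s := Ioi 0))).eventually_const_lt huv |>.and
      self_mem_nhdsWithin).exists.imp fun η h => ⟨h.2, h.1⟩
  set ℓ := Real.log Y - Real.log D with hℓ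
  have hℓ0 : 0 < ℓ := sub_pos.2 (Real.log_lt_log hD0 hDY)
  refine ⟨D * (κ * ℓ) / 2, by positivity, ?_⟩
  have hsmall : ∀ᶠ h : ℝ in 𝓝[>] 0, h * (κ * ℓ) < 1 := by
    have : Tendsto (fun h : ℝ => h * (κ * ℓ)) (𝓝 0) (𝓝 (0 * (κ * ℓ))) := tendsto_id.mul_const _
    rw [zero_mul] at this
    exact (this.mono_left nhdsWithin_le_nhds).eventually_lt_const one_pos
  filter_upwards [hsmall, self_mem_nhdsWithin] with s hs1 (hs0 : 0 < s)
  set G := (volume (K ∩ homothetCopy K τ (x + s • u))).toReal with hG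
  have hden : 0 < 1 + κ * s := by positivity
  set a := 1 / (1 + κ * s) with ha
  set b := κ * s / (1 + κ * s) with hb
  have ha0 : 0 < a := by positivity
  have hb0 : 0 < b := by positivity
  have hab : a + b = 1 := by rw [ha, hb]; field_simp
  have hlt : volume (K ∩ homothetCopy K τ (a • (x + s • u) + b • y)) < δ := by
    by_contra! hle
    have h1 := hv _ hle
    have h2 : a • (x + s • u) + b • y = x + (a * s) • (u + κ • (y - x)) := by
      have hbe : b = a * s * κ := by rw [ha, hb]; field_simp
      have hae : a = 1 - a * s * κ := by rw [← hbe]; linarith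
      calc a • (x + s • u) + b • y = a • x + (a * s) • u + (a * s * κ) • y := by
            rw [hbe]; module
        _ = (1 - a * s * κ) • x + (a * s) • u + (a * s * κ) • y := by rw [← hae]
        _ = _ := by module
    rw [h2, inner_add_left, real_inner_smul_left] at h1
    have : 0 < a * s * ⟪u + κ • (y - x), v⟫ := by positivity
    linarith
  have hprod : G ^ a * Y ^ b < D := by
    have h1 := (rpow_mul_rpow_le_volume_inter_homothetCopy hK hKc ha0 hb0 hab
      (x + s • u) y).trans_lt hlt
    have h2 := ENNReal.toReal_strict_mono hδT h1
    rwa [ENNReal.toReal_mul, ← ENNReal.toReal_rpow, ← ENNReal.toReal_rpow] at h2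
  have hY0 : 0 < Y := hD0.trans hDY
  have hGexp : G ≤ D * Real.exp (-(s * (κ * ℓ))) := by
    rcases (show 0 ≤ G from ENNReal.toReal_nonneg).eq_or_lt with h0 | hG0
    · rw [← h0]
      positivity
    · have hlog := Real.log_lt_log (by positivity) hprod
      rw [Real.log_mul (by positivity) (by positivity), Real.log_rpow hG0, Real.log_rpow hY0,
        ha, hb, div_mul_eq_mul_div, div_mul_eq_mul_div, ← add_div, div_lt_iff₀ hden] at hlog
      rw [← Real.log_le_log_iff hG0 (by positivity), Real.log_mul hD0.ne' (by positivity),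
        Real.log_exp, hℓ]
      linarith
  have hexp : Real.exp (-(s * (κ * ℓ))) ≤ 1 - s * (κ * ℓ) / 2 := by
    set t := s * (κ * ℓ) with ht
    have ht0 : 0 < t := by positivity
    rw [Real.exp_neg, inv_le_comm₀ (Real.exp_pos _) (by linarith)]
    refine le_trans ?_ (Real.add_one_le_exp t)
    rw [inv_le_iff_one_le_mul₀ (by linarith)]
    nlinarith
  rw [← ENNReal.ofReal_toReal (hfin (x + s • u))]
  refine ENNReal.ofReal_le_ofReal (hGexp.trans ?_)
  calc D * Real.exp (-(s * (κ * ℓ))) ≤ D * (1 - s * (κ * ℓ) / 2) := by gcongr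
    _ = D - D * (κ * ℓ) / 2 * s := by ring

theorem inner_lt_of_mem_interior {S : Set 𝔼} {x y v : 𝔼} (hv : ‖v‖ = 1)
    (hsup : ∀ z ∈ S, ⟪z, v⟫ ≤ ⟪x, v⟫) (hy : y ∈ interior S) : ⟪y, v⟫ < ⟪x, v⟫ := by
  have hlim : Tendsto (fun t : ℝ => y + t • v) (𝓝 0) (𝓝 (y + (0 : ℝ) • v)) :=
    Continuous.tendsto (by fun_prop) 0
  rw [zero_smul, add_zero] at hlim
  obtain ⟨t, ht, ht0⟩ := (((hlim.mono_left (nhdsWithin_le_nhds (s := Ioi 0))).eventually_mem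
    (isOpen_interior.mem_nhds hy)).and self_mem_nhdsWithin).exists
  have := hsup _ (interior_subset ht)
  rw [inner_add_left, real_inner_smul_left, real_inner_self_eq_norm_sq, hv] at this
  have ht0 : 0 < t := ht0
  linarith

theorem exists_supporting_unit_vector {S : Set 𝔼} (hS : Convex ℝ S) (hint : (interior S).Nonempty)
    {x : 𝔼} (hx : x ∉ interior S) : ∃ v : 𝔼, ‖v‖ = 1 ∧ ∀ z ∈ S, ⟪z, v⟫ ≤ ⟪x, v⟫ := by
  obtain ⟨f, hf⟩ := geometric_hahn_banach_open_point hS.interior isOpen_interior hx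
  obtain ⟨v, rfl⟩ := (InnerProductSpace.toDual ℝ 𝔼).surjective f
  simp only [InnerProductSpace.toDual_apply_apply] at hf
  have hle : ∀ z ∈ S, ⟪v, z⟫ ≤ ⟪v, x⟫ := fun z hz => by
    have hz' : z ∈ closure (interior S) := by
      rw [hS.closure_interior_eq_closure_of_nonempty_interior hint]
      exact subset_closure hz
    have hcl : IsClosed {p : 𝔼 | ⟪v, p⟫ ≤ ⟪v, x⟫} := isClosed_le (by fun_prop) continuous_const
    exact closure_minimal (fun p hp => (hf p hp).le) hcl hz'
  obtain ⟨y, hy⟩ := hint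
  have hv : v ≠ 0 := by
    rintro rfl
    simpa using hf y hy
  refine ⟨‖v‖⁻¹ • v, norm_smul_inv_norm hv, fun z hz => ?_⟩
  rw [real_inner_smul_right, real_inner_smul_right, real_inner_comm, real_inner_comm v x]
  gcongr
  exact hle z hz

/-- Supporting unit normals vary continuously along any set on which they are unique. -/
theorem continuousOn_of_unique_supporting {S : Set 𝔼} {N : 𝔼 → 𝔼} {F : Set 𝔼}
    (hN : ∀ x ∈ F, ‖N x‖ = 1 ∧ ∀ z ∈ S, ⟪z, N x⟫ ≤ ⟪x, N x⟫)
    (huniq : ∀ x ∈ F, ∀ v : 𝔼, ‖v‖ = 1 → (∀ z ∈ S, ⟪z, v⟫ ≤ ⟪x, v⟫) → v = N x) :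
    ContinuousOn N F := by
  intro x hx
  refine (isCompact_sphere (0 : 𝔼) 1).tendsto_nhds_of_unique_mapClusterPt ?_ ?_
  · filter_upwards [self_mem_nhdsWithin] with y hy
    simpa using (hN y hy).1
  · intro v hv hcl
    refine huniq x hx v (by simpa using hv) fun z hz => ?_
    rw [mapClusterPt_iff_ultrafilter] at hcl
    obtain ⟨U, hU, hUv⟩ := hcl
    have hUx : Tendsto id (U : Filter 𝔼) (𝓝 x) := hU.trans nhdsWithin_le_nhds
    refine le_of_tendsto_of_tendsto (tendsto_const_nhds.inner hUv) (hUx.inner hUv) ?_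
    filter_upwards [hU self_mem_nhdsWithin] with y hy
    exact (hN y hy).2 z hz

theorem supporting_unit_vector_unique (hK : IsCompact K) (hKint : (interior K).Nonempty)
    (hKs : StrictConvex ℝ K) (hτ : 0 < τ) {δ : ℝ≥0∞} (hδ0 : δ ≠ 0)
    (hδ : δ < ENNReal.ofReal (min 1 (τ ^ n)) * volume K) {x : 𝔼}
    (hx : volume (K ∩ homothetCopy K τ x) = δ) {v₁ v₂ : 𝔼} (hv₁ : ‖v₁‖ = 1) (hv₂ : ‖v₂‖ = 1)
    (hs₁ : ∀ z, δ ≤ volume (K ∩ homothetCopy K τ z) → ⟪z, v₁⟫ ≤ ⟪x, v₁⟫)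
    (hs₂ : ∀ z, δ ≤ volume (K ∩ homothetCopy K τ z) → ⟪z, v₂⟫ ≤ ⟪x, v₂⟫) : v₁ = v₂ := by
  by_contra hne
  have hKc := hKs.convex
  have hlt : ∀ k ∈ K, δ < volume (K ∩ homothetCopy K τ ((1 - τ) • k)) := fun k hk =>
    lt_measure_inter_homothetCopy volume hKc hτ (by simpa using hδ) hk
  have hcont := continuous_measure_inter_homothetCopy volume hK hKc hτ
  obtain ⟨k, hk⟩ := hKint
  set y := (1 - τ) • k with hy
  have hδy := hlt k (interior_subset hk)
  have hyint : y ∈ interior {z : 𝔼 | δ ≤ volume (K ∩ homothetCopy K τ z)} :=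
    interior_maximal (fun z hz => le_of_lt hz) (isOpen_lt continuous_const hcont) hδy
  set u := v₁ - v₂ with hu
  have hu0 : u ≠ 0 := sub_ne_zero.2 hne
  have hinner : ⟪v₁, v₂⟫ < 1 := by
    have hpos : 0 < ⟪u, u⟫ := real_inner_self_pos.2 hu0
    rw [hu, real_inner_sub_sub_self, real_inner_self_eq_norm_sq, real_inner_self_eq_norm_sq, hv₁,
      hv₂] at hpos
    linarith
  have hspan : Submodule.span ℝ {u} ≠ ⊤ := by
    intro htop
    have hmem : v₁ + v₂ ∈ Submodule.span ℝ {u} := htop ▸ Submodule.mem_top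
    obtain ⟨t, ht⟩ := Submodule.mem_span_singleton.1 hmem
    have horth : ⟪v₁ + v₂, u⟫ = 0 := by
      rw [hu, inner_add_left, inner_sub_right, inner_sub_right, real_inner_self_eq_norm_sq,
        real_inner_self_eq_norm_sq, hv₁, hv₂, real_inner_comm v₁ v₂]
      ring
    rw [← ht, real_inner_smul_left] at horth
    have ht0 : t = 0 := by
      rcases mul_eq_zero.1 horth with h | h
      · exact h
      · exact absurd (inner_self_eq_zero.1 h) hu0
    rw [ht0, zero_smul] at ht
    have hv : v₂ = -v₁ := (neg_eq_of_add_eq_zero_right ht.symm).symm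
    have h1 := inner_lt_of_mem_interior hv₁ hs₁ hyint
    have h2 := inner_lt_of_mem_interior hv₂ hs₂ hyint
    rw [hv, inner_neg_right, inner_neg_right] at h2
    linarith
  obtain ⟨q₀, hq₀⟩ : ∃ q₀ : 𝔼, ∀ q, q = x + τ • q → q = q₀ := by
    rcases eq_or_ne τ 1 with rfl | h1
    · refine ⟨0, fun q hq => ?_⟩
      have hx0 : x = 0 := by simpa using hq
      have := hlt k (interior_subset hk)
      rw [sub_self, zero_smul, ← hx0, hx] at this
      exact absurd this (lt_irrefl _)
    · refine ⟨(1 - τ)⁻¹ • x, fun q hq => ?_⟩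
      have h1' : 1 - τ ≠ 0 := sub_ne_zero.2 h1.symm
      rw [eq_inv_smul_iff₀ h1', sub_smul, one_smul, sub_eq_iff_eq_add]
      exact hq
  set L := homothetCopy K τ x with hL
  have hLcomp : IsCompact L := hK.homothetCopy x
  have hLc : Convex ℝ L := hKc.homothetCopy x
  have hMint : (interior (K ∩ L)).Nonempty :=
    interior_nonempty_of_measure_ne_zero volume (hK.isClosed.inter hLcomp.isClosed)
      (hKc.inter hLc) (by rw [hx]; exact hδ0)
  have htrans : ∀ q ∈ frontier K ∩ frontier L, q ≠ q₀ →
      ∃ w, q + w ∈ interior K ∧ q - w ∈ interior L := fun q hq hqne =>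
    hKs.exists_transversal ⟨k, hk⟩ hτ (hK.isClosed.frontier_subset hq.1)
      (hLcomp.isClosed.frontier_subset hq.2) fun h => hqne (hq₀ q h)
  have hspan' : Submodule.span ℝ {-u} ≠ ⊤ := by rwa [← Set.neg_singleton, Submodule.span_neg]
  have hu₁ : 0 < ⟪u, v₁⟫ := by
    rw [hu, inner_sub_left, real_inner_self_eq_norm_sq, hv₁, real_inner_comm]
    linarith
  have hu₂ : 0 < ⟪-u, v₂⟫ := by
    rw [hu, neg_sub, inner_sub_left, real_inner_self_eq_norm_sq, hv₂]
    linarith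
  obtain ⟨c₁, hc₁, hdrop₁⟩ := eventually_volume_inter_homothetCopy_le hK hKc hδ0 hδy hs₁ hu₁
  obtain ⟨c₂, hc₂, hdrop₂⟩ := eventually_volume_inter_homothetCopy_le hK hKc hδ0 hδy hs₂ hu₂
  have hε : ENNReal.ofReal (c₁ / 2) ≠ 0 := by simpa using hc₁
  have hexit₁ := eventually_measure_commonExit_le volume hK hLcomp hKc hLc hMint htrans
    (measure_sweep_singleton_eq_zero volume q₀ hspan) hε
  have hexit₂ := eventually_measure_commonExit_le volume hK hLcomp hKc hLc hMint htrans
    (measure_sweep_singleton_eq_zero volume q₀ hspan') hε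
  have hD0 : 0 < δ.toReal := ENNReal.toReal_pos hδ0 hδy.ne_top
  have hsmall : ∀ c : ℝ, ∀ᶠ h : ℝ in 𝓝[>] 0, c * h < δ.toReal := fun c => by
    have : Tendsto (fun h : ℝ => c * h) (𝓝 0) (𝓝 (c * 0)) := tendsto_id.const_mul c
    rw [mul_zero] at this
    exact (this.mono_left nhdsWithin_le_nhds).eventually_lt_const hD0
  obtain ⟨h, hd₁, hd₂, he₁, he₂, hsm₁, hsm₂, hh⟩ := (hdrop₁.and (hdrop₂.and (hexit₁.and
    (hexit₂.and ((hsmall c₁).and ((hsmall c₂).and self_mem_nhdsWithin)))))).exists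
  have hh : 0 < h := hh
  have key := two_mul_measure_inter_le volume hK.measurableSet hLcomp.measurableSet (h • u)
  rw [hL, preimage_sub_homothetCopy hτ, preimage_add_homothetCopy hτ, ← hL, hx, ← smul_neg] at key
  have key' := key.trans (add_le_add (add_le_add hd₁ hd₂) (add_le_add he₁ he₂))
  rw [← ENNReal.ofReal_toReal hδy.ne_top, ENNReal.toReal_ofReal hD0.le,
    ← ENNReal.ofReal_mul hh.le, ← ENNReal.ofReal_add (by linarith) (by linarith),
    ← ENNReal.ofReal_add (by positivity) (by positivity),
    ← ENNReal.ofReal_add (by linarith) (by positivity), two_mul,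
    ← ENNReal.ofReal_add hD0.le hD0.le,
    ENNReal.ofReal_le_ofReal_iff (add_nonneg (by linarith) (by positivity))] at key'
  nlinarith [mul_pos hc₂ hh]

end ConvolutionBody

/-- For a strictly convex body `K`, the boundary of the convolution body `K(δ,τ)` is `C¹`:
each boundary point has a unique (unit outer normal of a) supporting hyperplane, and these
normals vary continuously. -/
theorem stmt_7 (n : ℕ) (K : Set (EuclideanSpace ℝ (Fin n)))
    (hKcomp : IsCompact K) (hKconv : Convex ℝ K) (hKint : (interior K).Nonempty)
    (hKstrict : StrictConvex ℝ K)
    (τ : ℝ) (hτ : 0 < τ)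
    (δ : ENNReal) (hδ0 : 0 < δ)
    (hδ : δ < ENNReal.ofReal (min 1 (τ ^ n)) * volume K) :
    ∃ N : EuclideanSpace ℝ (Fin n) → EuclideanSpace ℝ (Fin n),
      ContinuousOn N
        (frontier {x : EuclideanSpace ℝ (Fin n) |
          δ ≤ volume (K ∩ (fun z => x + τ • z) '' K)}) ∧
      ∀ x ∈ frontier {x : EuclideanSpace ℝ (Fin n) |
          δ ≤ volume (K ∩ (fun z => x + τ • z) '' K)},
        (‖N x‖ = 1 ∧
          ∀ z, δ ≤ volume (K ∩ (fun w => z + τ • w) '' K) → ⟪z, N x⟫ ≤ ⟪x, N x⟫) ∧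
        ∀ v : EuclideanSpace ℝ (Fin n), ‖v‖ = 1 →
          (∀ z, δ ≤ volume (K ∩ (fun w => z + τ • w) '' K) → ⟪z, v⟫ ≤ ⟪x, v⟫) →
          v = N x := by
  set S : Set (EuclideanSpace ℝ (Fin n)) := {x | δ ≤ volume (K ∩ homothetCopy K τ x)} with hS
  have hcont := continuous_measure_inter_homothetCopy volume hKcomp hKconv hτ
  have hSconv : Convex ℝ S := convex_setOf_le_volume_inter_homothetCopy hKcomp hKconv δ
  have hSclosed : IsClosed S := isClosed_le continuous_const hcont
  have hopen : {x | δ < volume (K ∩ homothetCopy K τ x)} ⊆ interior S :=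
    interior_maximal (fun z hz => show δ ≤ _ from le_of_lt hz) (isOpen_lt continuous_const hcont)
  have hSint : (interior S).Nonempty := by
    obtain ⟨k, hk⟩ := hKint
    exact ⟨_, hopen (lt_measure_inter_homothetCopy volume hKconv hτ (by simpa using hδ)
      (interior_subset hk))⟩
  have hfr : ∀ x ∈ frontier S, volume (K ∩ homothetCopy K τ x) = δ := fun x hx =>
    le_antisymm (not_lt.1 fun h => hx.2 (hopen h)) (hSclosed.frontier_subset hx)
  have hex : ∀ x, ∃ v : EuclideanSpace ℝ (Fin n), x ∈ frontier S →
      ‖v‖ = 1 ∧ ∀ z ∈ S, ⟪z, v⟫ ≤ ⟪x, v⟫ := fun x => by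
    by_cases hx : x ∈ frontier S
    · exact (exists_supporting_unit_vector hSconv hSint hx.2).imp fun v hv _ => hv
    · exact ⟨0, fun h => absurd h hx⟩
  choose N hN using hex
  have huniq : ∀ x ∈ frontier S, ∀ v : EuclideanSpace ℝ (Fin n), ‖v‖ = 1 →
      (∀ z ∈ S, ⟪z, v⟫ ≤ ⟪x, v⟫) → v = N x := fun x hx v hv hvs =>
    supporting_unit_vector_unique hKcomp hKint hKstrict hτ hδ0.ne' hδ (hfr x hx) hv (hN x hx).1
      hvs (hN x hx).2
  exact ⟨N, continuousOn_of_unique_supporting hN huniq, fun x hx => ⟨hN x hx, huniq x hx⟩⟩
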